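/- Let M = (d, Q, δ) be a reset counter machine with states p_init, p_final ∈ Q, and let G(M) be the associated first-order grammar. For every state q ∈ Q and all tuples n̄, n̄' ∈ ℕ^d with n_i ≥ n'_i for all i: if there is NO m̄ ∈ ℕ^d with (q, (n₁−n'₁, …, n_d−n'_d)) →* (p_final, m̄) in M, then A_q(I^{n₁}⊥, I^{n'₁}⊥, …, I^{n_d}⊥, I^{n'_d}⊥) ∼ B_q(I^{n₁}⊥, I^{n'₁}⊥, …, I^{n_d}⊥, I^{n'_d}⊥) in L_{G(M)}. -/

import Mathlib

/-!
The counter value of the simulated machine is the difference `n i - n' i` of the two exponents stored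
for counter `i`. The relation consisting of the identity and the symmetric closure of `Pair` is a
bisimulation: from a pair `A_q, B_q` with the final state out of reach, increments and resets are
copied and lead to a pair of the same kind. For a decrement of counter `i`, all moves into `B_(q,i,1)`
or `B_(q,i,2)` can be answered by reaching the identical term, so only the move of `A_p` to `A_(q,i)`
matters. If `n' i < n i`, it is answered by `B_(q,i,1)`: the action `b` then gives equal terms, and the
action `a` performs a legal step of the machine. If `n i = n' i`, it is answered by `B_(q,i,2)`:
the action `a` then gives equal terms, and so does `b`, because the two exponents agree.
The rule of `A_{p_final}` never fires, because the final state is out of reach.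
-/

/-- First-order terms over a set `N` of function symbols (nonterminals);
variables `x_{i+1}` are represented as `var i`. -/
inductive FOTerm (N : Type) : Type
  | var : ℕ → FOTerm N
  | app : N → List (FOTerm N) → FOTerm N

/-- Substitution of terms for variables. -/
def FOTerm.subst {N : Type} (σ : ℕ → FOTerm N) : FOTerm N → FOTerm N
  | .var i => σ i
  | .app A ts => .app A (ts.attach.map fun ⟨t, _⟩ => t.subst σ)

/-- A first-order grammar: ranked nonterminals, actions, and root-rewriting rules;
`Rule A a V` means the rule `A(x₁,…,x_{arity A}) →a V` is in the grammar. -/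
structure Grammar where
  N : Type
  arity : N → ℕ
  Act : Type
  Rule : N → Act → FOTerm N → Prop

/-- The labelled transition system `L_G` induced by a grammar: each rule
`A(x₁,…,x_m) →a V` induces transitions `(A(x₁,…,x_m))σ →a Vσ` for all substitutions σ. -/
inductive Grammar.Step (G : Grammar) : FOTerm G.N → G.Act → FOTerm G.N → Prop
  | step (A : G.N) (a : G.Act) (V : FOTerm G.N) (σ : ℕ → FOTerm G.N) :
      G.Rule A a V →
      G.Step (.app A ((List.range (G.arity A)).map σ)) a (V.subst σ)

/-- A (symmetric) bisimulation for the LTS `L_G`. -/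
def Grammar.IsBisimulation (G : Grammar) (B : FOTerm G.N → FOTerm G.N → Prop) : Prop :=
  (∀ T U, B T U → B U T) ∧
  ∀ T U, B T U → ∀ a T', G.Step T a T' → ∃ U', G.Step U a U' ∧ B T' U'

/-- Bisimilarity: `T ∼ U` iff some bisimulation contains `(T, U)`. -/
def Grammar.Bisim (G : Grammar) (T U : FOTerm G.N) : Prop :=
  ∃ B, G.IsBisimulation B ∧ B T U

/-- Operations of a reset counter machine with `d` counters. -/
inductive RCMOp (d : ℕ) : Type
  | inc : Fin d → RCMOp d
  | dec : Fin d → RCMOp d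
  | reset : Fin d → RCMOp d

/-- A reset counter machine `M = (d, Q, δ)`. -/
structure RCM where
  d : ℕ
  Q : Type
  finQ : Finite Q
  δ : Q → RCMOp d → Q → Prop

/-- The step relation on configurations `(q, n̄) ∈ Q × ℕ^d` of an RCM. -/
inductive RCM.StepR (M : RCM) : (M.Q × (Fin M.d → ℕ)) → (M.Q × (Fin M.d → ℕ)) → Prop
  | inc {p q : M.Q} {i : Fin M.d} {n : Fin M.d → ℕ} :
      M.δ p (.inc i) q → M.StepR (p, n) (q, Function.update n i (n i + 1))
  | dec {p q : M.Q} {i : Fin M.d} {n : Fin M.d → ℕ} :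
      M.δ p (.dec i) q → 0 < n i → M.StepR (p, n) (q, Function.update n i (n i - 1))
  | reset {p q : M.Q} {i : Fin M.d} {n : Fin M.d → ℕ} :
      M.δ p (.reset i) q → M.StepR (p, n) (q, Function.update n i 0)

/-- `pfin` is reachable from configuration `c`: `c →* (pfin, m̄)` for some `m̄`. -/
def RCM.ReachesFinal (M : RCM) (pfin : M.Q) (c : M.Q × (Fin M.d → ℕ)) : Prop :=
  ∃ m : Fin M.d → ℕ, Relation.ReflTransGen M.StepR c (pfin, m)

/-- Nonterminals of the grammar `G(M)`: unary `I`, nullary `bot`, and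
`A_p, B_p, A_(p,i), B_(p,i,1), B_(p,i,2)` of arity `2d` for `p ∈ Q`, `1 ≤ i ≤ d`. -/
inductive GNT (Q : Type) (d : ℕ) : Type
  | I : GNT Q d
  | bot : GNT Q d
  | A : Q → GNT Q d
  | B : Q → GNT Q d
  | Ai : Q → Fin d → GNT Q d
  | B1 : Q → Fin d → GNT Q d
  | B2 : Q → Fin d → GNT Q d

def GNT.arity {Q : Type} {d : ℕ} : GNT Q d → ℕ
  | .I => 1
  | .bot => 0
  | _ => 2 * d

/-- Actions of `G(M)`: the instructions of `M`, plus auxiliary actions `a` and `b`. -/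
inductive GAct (Q : Type) (d : ℕ) : Type
  | instr : Q → RCMOp d → Q → GAct Q d
  | a : GAct Q d
  | b : GAct Q d

/-- The tuple of variables `x̄ = (x₁,…,x_{2d})`. -/
def xbar (Q : Type) (d : ℕ) : List (FOTerm (GNT Q d)) :=
  (List.range (2 * d)).map FOTerm.var

/-- The rules of the grammar `G(M)` (for final state `pfin`). -/
inductive GRule (M : RCM) (pfin : M.Q) :
    GNT M.Q M.d → GAct M.Q M.d → FOTerm (GNT M.Q M.d) → Prop
  | irule : GRule M pfin .I .a (.var 0)
  | finrule : GRule M pfin (.A pfin) .a (.app .bot [])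
  | incA {p q : M.Q} {i : Fin M.d} : M.δ p (.inc i) q →
      GRule M pfin (.A p) (.instr p (.inc i) q)
        (.app (.A q) ((xbar M.Q M.d).set (2 * (i : ℕ)) (.app .I [.var (2 * (i : ℕ))])))
  | incB {p q : M.Q} {i : Fin M.d} : M.δ p (.inc i) q →
      GRule M pfin (.B p) (.instr p (.inc i) q)
        (.app (.B q) ((xbar M.Q M.d).set (2 * (i : ℕ)) (.app .I [.var (2 * (i : ℕ))])))
  | resetA {p q : M.Q} {i : Fin M.d} : M.δ p (.reset i) q →
      GRule M pfin (.A p) (.instr p (.reset i) q)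
        (.app (.A q) (((xbar M.Q M.d).set (2 * (i : ℕ)) (.app .bot [])).set
          (2 * (i : ℕ) + 1) (.app .bot [])))
  | resetB {p q : M.Q} {i : Fin M.d} : M.δ p (.reset i) q →
      GRule M pfin (.B p) (.instr p (.reset i) q)
        (.app (.B q) (((xbar M.Q M.d).set (2 * (i : ℕ)) (.app .bot [])).set
          (2 * (i : ℕ) + 1) (.app .bot [])))
  | decA {p q : M.Q} {i : Fin M.d} : M.δ p (.dec i) q →
      GRule M pfin (.A p) (.instr p (.dec i) q) (.app (.Ai q i) (xbar M.Q M.d))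
  | decAB1 {p q : M.Q} {i : Fin M.d} : M.δ p (.dec i) q →
      GRule M pfin (.A p) (.instr p (.dec i) q) (.app (.B1 q i) (xbar M.Q M.d))
  | decAB2 {p q : M.Q} {i : Fin M.d} : M.δ p (.dec i) q →
      GRule M pfin (.A p) (.instr p (.dec i) q) (.app (.B2 q i) (xbar M.Q M.d))
  | decBB1 {p q : M.Q} {i : Fin M.d} : M.δ p (.dec i) q →
      GRule M pfin (.B p) (.instr p (.dec i) q) (.app (.B1 q i) (xbar M.Q M.d))
  | decBB2 {p q : M.Q} {i : Fin M.d} : M.δ p (.dec i) q →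
      GRule M pfin (.B p) (.instr p (.dec i) q) (.app (.B2 q i) (xbar M.Q M.d))
  | auxAa {p q : M.Q} {i : Fin M.d} : M.δ p (.dec i) q →
      GRule M pfin (.Ai q i) .a
        (.app (.A q) ((xbar M.Q M.d).set (2 * (i : ℕ) + 1) (.app .I [.var (2 * (i : ℕ) + 1)])))
  | auxB1a {p q : M.Q} {i : Fin M.d} : M.δ p (.dec i) q →
      GRule M pfin (.B1 q i) .a
        (.app (.B q) ((xbar M.Q M.d).set (2 * (i : ℕ) + 1) (.app .I [.var (2 * (i : ℕ) + 1)])))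
  | auxB2a {p q : M.Q} {i : Fin M.d} : M.δ p (.dec i) q →
      GRule M pfin (.B2 q i) .a
        (.app (.A q) ((xbar M.Q M.d).set (2 * (i : ℕ) + 1) (.app .I [.var (2 * (i : ℕ) + 1)])))
  | auxAb {p q : M.Q} {i : Fin M.d} : M.δ p (.dec i) q →
      GRule M pfin (.Ai q i) .b (.var (2 * (i : ℕ)))
  | auxB1b {p q : M.Q} {i : Fin M.d} : M.δ p (.dec i) q →
      GRule M pfin (.B1 q i) .b (.var (2 * (i : ℕ)))
  | auxB2b {p q : M.Q} {i : Fin M.d} : M.δ p (.dec i) q →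
      GRule M pfin (.B2 q i) .b (.var (2 * (i : ℕ) + 1))

/-- The grammar `G(M)` associated with an RCM `M` and final state `pfin`. -/
@[reducible] def GrammarOf (M : RCM) (pfin : M.Q) : Grammar where
  N := GNT M.Q M.d
  arity := GNT.arity
  Act := GAct M.Q M.d
  Rule := GRule M pfin

/-- `iterTerm I bot n` is the term `Iⁿ⊥`. -/
def iterTerm {N : Type} (I bot : N) : ℕ → FOTerm N
  | 0 => .app bot []
  | n + 1 => .app I [iterTerm I bot n]

/-- `Iⁿ⊥` in the grammar `G(M)`. -/
@[reducible] def ipow {Q : Type} {d : ℕ} (n : ℕ) : FOTerm (GNT Q d) :=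
  iterTerm GNT.I GNT.bot n

/-- The `2d`-tuple of arguments `(I^{n₁}⊥, I^{n'₁}⊥, …, I^{n_d}⊥, I^{n'_d}⊥)`. -/
def vterms {Q : Type} {d : ℕ} (n n' : Fin d → ℕ) : List (FOTerm (GNT Q d)) :=
  (List.finRange d).flatMap fun i => [ipow (n i), ipow (n' i)]

/-! ### Argument tuples and substitution -/

theorem FOTerm.subst_app {N : Type} (σ : ℕ → FOTerm N) (A : N) (ts : List (FOTerm N)) :
    (FOTerm.app A ts).subst σ = .app A (ts.map (FOTerm.subst σ)) := by
  simp [FOTerm.subst]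

theorem FOTerm.subst_var {N : Type} (σ : ℕ → FOTerm N) (k : ℕ) :
    (FOTerm.var k).subst σ = σ k := by
  simp [FOTerm.subst]

theorem xbar_map_subst {Q : Type} {d : ℕ} (σ : ℕ → FOTerm (GNT Q d)) :
    (xbar Q d).map (FOTerm.subst σ) = (List.range (2 * d)).map σ := by
  simp [xbar, FOTerm.subst_var]

/-- The tuple of arguments as a function of the (zero-based) position; `⊥` outside the range. -/
def tupleEntry {Q : Type} {d : ℕ} (n n' : Fin d → ℕ) (k : ℕ) : FOTerm (GNT Q d) :=
  if h : k / 2 < d then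
    if k % 2 = 0 then ipow (n ⟨k / 2, h⟩) else ipow (n' ⟨k / 2, h⟩)
  else .app .bot []

theorem flatMap_pair_eq {α : Type} (d : ℕ) (f g : Fin d → α) (F : ℕ → α)
    (hf : ∀ i : Fin d, F (2 * i) = f i) (hg : ∀ i : Fin d, F (2 * i + 1) = g i) :
    ((List.finRange d).flatMap fun i => [f i, g i]) = (List.range (2 * d)).map F := by
  induction d with
  | zero => simp
  | succ d ih =>
    have e := ih (fun i => f i.castSucc) (fun i => g i.castSucc)
      (fun i => hf i.castSucc) (fun i => hg i.castSucc)
    have h1 := hf (Fin.last d)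
    have h2 := hg (Fin.last d)
    simp only [Fin.val_last] at h1 h2
    rw [List.finRange_succ_last, List.flatMap_append, List.flatMap_map, e,
      show 2 * (d + 1) = 2 * d + 1 + 1 by ring, List.range_succ, List.range_succ]
    simp [h1, h2]

theorem vterms_eq {Q : Type} {d : ℕ} (n n' : Fin d → ℕ) :
    (vterms n n' : List (FOTerm (GNT Q d))) = (List.range (2 * d)).map (tupleEntry n n') := by
  refine flatMap_pair_eq d _ _ _ (fun i => ?_) (fun i => ?_)
  · simp [tupleEntry]
  · have h1 : (2 * (i : ℕ) + 1) / 2 = i := by omega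
    have h2 : (2 * (i : ℕ) + 1) % 2 = 1 := by omega
    simp [tupleEntry, h1]

theorem vterms_set_even {Q : Type} {d : ℕ} (n n' : Fin d → ℕ) (i : Fin d) (m : ℕ) :
    (vterms n n' : List (FOTerm (GNT Q d))).set (2 * (i : ℕ)) (ipow m) =
      vterms (Function.update n i m) n' := by
  rw [vterms_eq, vterms_eq]
  apply List.ext_getElem
  · simp
  intro k h1 h2
  have hk : k < 2 * d := by simpa using h2
  have hk' : k / 2 < d := by omega
  simp only [List.getElem_set, List.getElem_map, List.getElem_range, tupleEntry, hk', dite_true]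
  by_cases hi : (⟨k / 2, hk'⟩ : Fin d) = i
  · subst hi
    by_cases he : k % 2 = 0
    · simp [he, show 2 * (k / 2) = k by omega]
    · simp [he, show 2 * (k / 2) ≠ k by omega]
  · have : 2 * (i : ℕ) ≠ k := by
      rintro rfl
      apply hi
      ext
      simp
    simp [this, Function.update_of_ne hi]

theorem vterms_set_odd {Q : Type} {d : ℕ} (n n' : Fin d → ℕ) (i : Fin d) (m : ℕ) :
    (vterms n n' : List (FOTerm (GNT Q d))).set (2 * (i : ℕ) + 1) (ipow m) =
      vterms n (Function.update n' i m) := by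
  rw [vterms_eq, vterms_eq]
  apply List.ext_getElem
  · simp
  intro k h1 h2
  have hk : k < 2 * d := by simpa using h2
  have hk' : k / 2 < d := by omega
  simp only [List.getElem_set, List.getElem_map, List.getElem_range, tupleEntry, hk', dite_true]
  by_cases hi : (⟨k / 2, hk'⟩ : Fin d) = i
  · subst hi
    by_cases he : k % 2 = 0
    · simp [he, show 2 * (k / 2) + 1 ≠ k by omega]
    · simp [he, show 2 * (k / 2) + 1 = k by omega]
  · have : 2 * (i : ℕ) + 1 ≠ k := by
      rintro rfl
      apply hi
      ext
      simp only
      omega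
    simp [this, Function.update_of_ne hi]

section Subst

variable {Q : Type} {d : ℕ} {n n' : Fin d → ℕ} {σ : ℕ → FOTerm (GNT Q d)}

theorem sigma_even (hσ : vterms n n' = (List.range (2 * d)).map σ) (i : Fin d) :
    σ (2 * (i : ℕ)) = ipow (n i) := by
  rw [vterms_eq] at hσ
  have h := List.map_inj_left.mp hσ (2 * (i : ℕ)) (by simp)
  rw [← h]
  simp [tupleEntry]

theorem sigma_odd (hσ : vterms n n' = (List.range (2 * d)).map σ) (i : Fin d) :
    σ (2 * (i : ℕ) + 1) = ipow (n' i) := by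
  rw [vterms_eq] at hσ
  have h := List.map_inj_left.mp hσ (2 * (i : ℕ) + 1) (by simp; omega)
  rw [← h]
  simp [tupleEntry, show (2 * (i : ℕ) + 1) / 2 = i by omega]

theorem subst_xbar (hσ : vterms n n' = (List.range (2 * d)).map σ) (X : GNT Q d) :
    (FOTerm.app X (xbar Q d)).subst σ = .app X (vterms n n') := by
  rw [FOTerm.subst_app, xbar_map_subst, hσ]

theorem subst_inc (hσ : vterms n n' = (List.range (2 * d)).map σ) (X : GNT Q d) (i : Fin d) :
    (FOTerm.app X ((xbar Q d).set (2 * (i : ℕ)) (.app .I [.var (2 * (i : ℕ))]))).subst σ =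
      .app X (vterms (Function.update n i (n i + 1)) n') := by
  rw [FOTerm.subst_app, List.map_set, xbar_map_subst, ← hσ, ← vterms_set_even]
  simp [FOTerm.subst_app, FOTerm.subst_var, sigma_even hσ, ipow, iterTerm]

theorem subst_dec (hσ : vterms n n' = (List.range (2 * d)).map σ) (X : GNT Q d) (i : Fin d) :
    (FOTerm.app X ((xbar Q d).set (2 * (i : ℕ) + 1) (.app .I [.var (2 * (i : ℕ) + 1)]))).subst σ =
      .app X (vterms n (Function.update n' i (n' i + 1))) := by
  rw [FOTerm.subst_app, List.map_set, xbar_map_subst, ← hσ, ← vterms_set_odd]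
  simp [FOTerm.subst_app, FOTerm.subst_var, sigma_odd hσ, ipow, iterTerm]

theorem subst_reset (hσ : vterms n n' = (List.range (2 * d)).map σ) (X : GNT Q d) (i : Fin d) :
    (FOTerm.app X (((xbar Q d).set (2 * (i : ℕ)) (.app .bot [])).set
      (2 * (i : ℕ) + 1) (.app .bot []))).subst σ =
      .app X (vterms (Function.update n i 0) (Function.update n' i 0)) := by
  rw [FOTerm.subst_app, List.map_set, List.map_set, xbar_map_subst, ← hσ, ← vterms_set_odd,
    ← vterms_set_even]
  simp [FOTerm.subst_app, ipow, iterTerm]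

end Subst

/-! ### Machine steps on differences of exponents -/

/-- The exponents `n, n'` encode counter values `n - n'` from which, starting in state `q`, the
final state is out of reach. -/
structure Safe (M : RCM) (pfin q : M.Q) (n n' : Fin M.d → ℕ) : Prop where
  le : ∀ i, n' i ≤ n i
  not_reach : ¬ M.ReachesFinal pfin (q, fun i => n i - n' i)

section Safe

variable {M : RCM} {pfin p q : M.Q} {n n' : Fin M.d → ℕ} {i : Fin M.d}

theorem Safe.ne (h : Safe M pfin q n n') : q ≠ pfin := by
  rintro rfl
  exact h.not_reach ⟨_, .refl⟩

theorem Safe.of_step {m m' : Fin M.d → ℕ} (h : Safe M pfin p n n') (hle : ∀ j, m' j ≤ m j)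
    (hs : M.StepR (p, fun j => n j - n' j) (q, fun j => m j - m' j)) : Safe M pfin q m m' :=
  ⟨hle, fun ⟨k, hk⟩ => h.not_reach ⟨k, .head hs hk⟩⟩

theorem Safe.inc (h : Safe M pfin p n n') (hδ : M.δ p (.inc i) q) :
    Safe M pfin q (Function.update n i (n i + 1)) n' := by
  refine h.of_step (fun j => ?_) ?_
  · have := h.le j
    by_cases hj : j = i
    · subst hj; simp; omega
    · simpa [hj] using this
  · convert RCM.StepR.inc hδ using 2
    funext j
    have := h.le j
    by_cases hj : j = i
    · subst hj; simp; omega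
    · simp [hj]

theorem Safe.reset (h : Safe M pfin p n n') (hδ : M.δ p (.reset i) q) :
    Safe M pfin q (Function.update n i 0) (Function.update n' i 0) := by
  refine h.of_step (fun j => ?_) ?_
  · have := h.le j
    by_cases hj : j = i
    · subst hj; simp
    · simpa [hj] using this
  · convert RCM.StepR.reset hδ using 2
    funext j
    by_cases hj : j = i
    · subst hj; simp
    · simp [hj]

/-- A decrement of the counter raises the subtracted exponent by one, which is a machine step only
if the counter is positive. -/
theorem Safe.dec (h : Safe M pfin p n n') (hδ : M.δ p (.dec i) q) (hlt : n' i < n i) :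
    Safe M pfin q n (Function.update n' i (n' i + 1)) := by
  refine h.of_step (fun j => ?_) ?_
  · have := h.le j
    by_cases hj : j = i
    · subst hj; simp; omega
    · simpa [hj] using this
  · convert RCM.StepR.dec (n := fun j => n j - n' j) hδ (by simp; omega) using 2
    funext j
    by_cases hj : j = i
    · subst hj; simp; omega
    · simp [hj]

end Safe

/-! ### The bisimulation -/

/-- The nontrivial pairs of the bisimulation, up to symmetry: `main` for simulated configurations,
`legal` for a decrement of a positive counter, `illegal` for an attempted decrement of a zero one. -/
inductive Pair (M : RCM) (pfin : M.Q) :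
    FOTerm (GNT M.Q M.d) → FOTerm (GNT M.Q M.d) → Prop
  | main {q : M.Q} {n n' : Fin M.d → ℕ} : Safe M pfin q n n' →
      Pair M pfin (.app (.A q) (vterms n n')) (.app (.B q) (vterms n n'))
  | legal {q : M.Q} {i : Fin M.d} {n n' : Fin M.d → ℕ} :
      Safe M pfin q n (Function.update n' i (n' i + 1)) →
      Pair M pfin (.app (.Ai q i) (vterms n n')) (.app (.B1 q i) (vterms n n'))
  | illegal {q : M.Q} {i : Fin M.d} {n n' : Fin M.d → ℕ} : n i = n' i →
      Pair M pfin (.app (.Ai q i) (vterms n n')) (.app (.B2 q i) (vterms n n'))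

theorem step_inv {M : RCM} {pfin : M.Q} {X : GNT M.Q M.d} {ts : List (FOTerm (GNT M.Q M.d))}
    {α : GAct M.Q M.d} {T' : FOTerm (GNT M.Q M.d)}
    (h : (GrammarOf M pfin).Step (.app X ts) α T') :
    ∃ V σ, GRule M pfin X α V ∧ ts = (List.range X.arity).map σ ∧ T' = V.subst σ := by
  cases h with
  | step A α V σ hr => exact ⟨V, σ, hr, rfl, rfl⟩

theorem step_intro {M : RCM} {pfin : M.Q} {X : GNT M.Q M.d} {ts : List (FOTerm (GNT M.Q M.d))}
    {α : GAct M.Q M.d} {V : FOTerm (GNT M.Q M.d)} {σ : ℕ → FOTerm (GNT M.Q M.d)}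
    (hr : GRule M pfin X α V) (hts : ts = (List.range X.arity).map σ) :
    (GrammarOf M pfin).Step (.app X ts) α (V.subst σ) := by
  subst hts
  exact Grammar.Step.step (G := GrammarOf M pfin) X α V σ hr

theorem Pair.forward {M : RCM} {pfin : M.Q} {T U T' : FOTerm (GNT M.Q M.d)} {α : GAct M.Q M.d}
    (h : Pair M pfin T U) (hs : (GrammarOf M pfin).Step T α T') :
    ∃ U', (GrammarOf M pfin).Step U α U' ∧ (T' = U' ∨ Pair M pfin T' U') := by
  cases h with
  | @main q n n' hsafe =>
    obtain ⟨V, σ, hr, hσ, rfl⟩ := step_inv hs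
    cases hr with
    | finrule => exact absurd rfl hsafe.ne
    | incA hδ =>
      refine ⟨_, step_intro (.incB hδ) hσ, .inr ?_⟩
      rw [subst_inc hσ, subst_inc hσ]
      exact .main (hsafe.inc hδ)
    | resetA hδ =>
      refine ⟨_, step_intro (.resetB hδ) hσ, .inr ?_⟩
      rw [subst_reset hσ, subst_reset hσ]
      exact .main (hsafe.reset hδ)
    | @decA _ _ i hδ =>
      rcases (hsafe.le i).lt_or_eq with hlt | heq
      · refine ⟨_, step_intro (.decBB1 hδ) hσ, .inr ?_⟩
        rw [subst_xbar hσ, subst_xbar hσ]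
        exact .legal (hsafe.dec hδ hlt)
      · refine ⟨_, step_intro (.decBB2 hδ) hσ, .inr ?_⟩
        rw [subst_xbar hσ, subst_xbar hσ]
        exact .illegal heq.symm
    | decAB1 hδ => exact ⟨_, step_intro (.decBB1 hδ) hσ, .inl rfl⟩
    | decAB2 hδ => exact ⟨_, step_intro (.decBB2 hδ) hσ, .inl rfl⟩
  | @legal q i n n' hsafe =>
    obtain ⟨V, σ, hr, hσ, rfl⟩ := step_inv hs
    cases hr with
    | auxAa hδ =>
      refine ⟨_, step_intro (.auxB1a hδ) hσ, .inr ?_⟩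
      rw [subst_dec hσ, subst_dec hσ]
      exact .main hsafe
    | auxAb hδ => exact ⟨_, step_intro (.auxB1b hδ) hσ, .inl rfl⟩
  | @illegal q i n n' heq =>
    obtain ⟨V, σ, hr, hσ, rfl⟩ := step_inv hs
    cases hr with
    | auxAa hδ => exact ⟨_, step_intro (.auxB2a hδ) hσ, .inl rfl⟩
    | auxAb hδ =>
      refine ⟨_, step_intro (.auxB2b hδ) hσ, .inl ?_⟩
      rw [FOTerm.subst_var, FOTerm.subst_var, sigma_even hσ, sigma_odd hσ, heq]

theorem Pair.backward {M : RCM} {pfin : M.Q} {T U U' : FOTerm (GNT M.Q M.d)} {α : GAct M.Q M.d}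
    (h : Pair M pfin T U) (hs : (GrammarOf M pfin).Step U α U') :
    ∃ T', (GrammarOf M pfin).Step T α T' ∧ (T' = U' ∨ Pair M pfin T' U') := by
  cases h with
  | @main q n n' hsafe =>
    obtain ⟨V, σ, hr, hσ, rfl⟩ := step_inv hs
    cases hr with
    | incB hδ =>
      refine ⟨_, step_intro (.incA hδ) hσ, .inr ?_⟩
      rw [subst_inc hσ, subst_inc hσ]
      exact .main (hsafe.inc hδ)
    | resetB hδ =>
      refine ⟨_, step_intro (.resetA hδ) hσ, .inr ?_⟩
      rw [subst_reset hσ, subst_reset hσ]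
      exact .main (hsafe.reset hδ)
    | decBB1 hδ => exact ⟨_, step_intro (.decAB1 hδ) hσ, .inl rfl⟩
    | decBB2 hδ => exact ⟨_, step_intro (.decAB2 hδ) hσ, .inl rfl⟩
  | @legal q i n n' hsafe =>
    obtain ⟨V, σ, hr, hσ, rfl⟩ := step_inv hs
    cases hr with
    | auxB1a hδ =>
      refine ⟨_, step_intro (.auxAa hδ) hσ, .inr ?_⟩
      rw [subst_dec hσ, subst_dec hσ]
      exact .main hsafe
    | auxB1b hδ => exact ⟨_, step_intro (.auxAb hδ) hσ, .inl rfl⟩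
  | @illegal q i n n' heq =>
    obtain ⟨V, σ, hr, hσ, rfl⟩ := step_inv hs
    cases hr with
    | auxB2a hδ => exact ⟨_, step_intro (.auxAa hδ) hσ, .inl rfl⟩
    | auxB2b hδ =>
      refine ⟨_, step_intro (.auxAb hδ) hσ, .inl ?_⟩
      rw [FOTerm.subst_var, FOTerm.subst_var, sigma_even hσ, sigma_odd hσ, heq]

/-- For every state `q` and tuples `n̄ ≥ n̄'` (componentwise):
if there is NO `m̄` with `(q, n̄ − n̄') →* (p_final, m̄)` in `M`, then
`A_q(I^{n₁}⊥, I^{n'₁}⊥, …, I^{n_d}⊥, I^{n'_d}⊥) ∼ B_q(I^{n₁}⊥, I^{n'₁}⊥, …, I^{n_d}⊥, I^{n'_d}⊥)`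
in `L_{G(M)}`. -/
theorem bisim_of_not_reachable (M : RCM) (pinit pfin : M.Q) (q : M.Q)
    (n n' : Fin M.d → ℕ) (h : ∀ i, n' i ≤ n i)
    (hnreach : ¬ ∃ m : Fin M.d → ℕ,
      Relation.ReflTransGen M.StepR (q, fun i => n i - n' i) (pfin, m)) :
    (GrammarOf M pfin).Bisim
        (.app (.A q) (vterms n n')) (.app (.B q) (vterms n n')) := by
  refine ⟨fun T U => T = U ∨ Pair M pfin T U ∨ Pair M pfin U T, ⟨?_, ?_⟩,
    .inr (.inl (.main ⟨h, hnreach⟩))⟩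
  · rintro T U (rfl | hp | hp)
    · exact .inl rfl
    · exact .inr (.inr hp)
    · exact .inr (.inl hp)
  · rintro T U (rfl | hp | hp) α T' hs
    · exact ⟨T', hs, .inl rfl⟩
    · obtain ⟨U', hU, he | hp'⟩ := hp.forward hs
      · exact ⟨U', hU, .inl he⟩
      · exact ⟨U', hU, .inr (.inl hp')⟩
    · obtain ⟨U', hU, he | hp'⟩ := hp.backward hs
      · exact ⟨U', hU, .inl he.symm⟩
      · exact ⟨U', hU, .inr (.inr hp')⟩
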